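/- Let n and x be real numbers and let k be an integer with k ≥ 1. Then Σ_{r=1}^{k} binom(n, r) · ( Σ_{(s_1,…,s_r)∈T(r,k)} binom(x, s_1)⋯binom(x, s_r) ) = Σ_{i=1}^{k} (−1)^{k−i} · binom(n, i) · binom(n−i−1, k−i) · binom(i·x, k). (In the paper x = ν^{-1}; this is the closed formula for the coefficients λ_n^k, after cancelling the common factor (ν/s)^k.) -/

import Mathlib

noncomputable section

open scoped Classical

/-- The generalized binomial coefficient `a (a-1) ⋯ (a-k+1) / k!` in a field `K`
(of characteristic zero in all uses). -/
def gbinom {K : Type*} [Field K] (a : K) (k : ℕ) : K :=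
  (∏ i ∈ Finset.range k, (a - (i : K))) / (k.factorial : K)

/-- `Tsum x i l = Σ_{(j₁,…,j_i) ∈ T(i,l)} binom(x,j₁)⋯binom(x,j_i)`, the sum over all
`i`-tuples of positive integers with sum `l` (a finitely supported sum). -/
def Tsum (x : ℝ) (i l : ℕ) : ℝ :=
  ∑ᶠ c : Fin i → ℕ,
    if (∀ t, 1 ≤ c t) ∧ (∑ t, c t) = l then ∏ t, gbinom x (c t) else 0

end

/-!
Put `y = (1 + X) ^ x` as a power series. The sum over `T(r, k)` is the coefficient of `X ^ k` in
`(y - 1) ^ r`, and `binom(i x, k)` is its coefficient in `y ^ i`. Both sides are therefore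
coefficients of the binomial series of `y ^ n` around `y = 1`, truncated at degree `k`: the left
side in powers of `y - 1`, the right side re-expanded in powers of `y`. In the re-expansion the
coefficient of `y ^ i` satisfies a recursion in `k` that comes from Pascal's rule.
-/

open PowerSeries

theorem sum_Icc_one_eq_sum_range_succ {M : Type*} [AddCommMonoid M] {f : ℕ → M} (hf : f 0 = 0)
    (k : ℕ) : ∑ i ∈ Finset.Icc 1 k, f i = ∑ i ∈ Finset.range (k + 1), f i := by
  rw [Finset.range_eq_Ico, Finset.sum_eq_sum_Ico_succ_bot k.succ_pos, hf, zero_add]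
  rfl

section TruncatedBinomialSeries

variable {R A : Type*} [CommRing R] [Ring A] [Algebra R A]

theorem smul_sub_one_pow_eq_sum (a : R) (y : A) (r : ℕ) :
    a • (y - 1) ^ r =
      ∑ i ∈ Finset.range (r + 1), (a * ((-1) ^ (r - i) * r.choose i)) • y ^ i := by
  rw [sub_eq_add_neg, (Commute.one_right y).neg_right.add_pow, Finset.smul_sum]
  refine Finset.sum_congr rfl fun i _ ↦ ?_
  rw [mul_smul, Algebra.smul_def (_ * _)]
  simp only [map_mul, map_pow, map_neg, map_one, map_natCast]
  rw [mul_assoc, ← ((Commute.neg_one_left (y ^ i)).pow_left _ |>.mul_left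
    (Nat.cast_commute _ _)).eq]

variable [BinomialRing R]

theorem neg_one_pow_mul_choose_mul_choose_succ (n : R) {i k : ℕ} (hik : i ≤ k) :
    (-1) ^ (k + 1 - i) * Ring.choose n i * Ring.choose (n - i - 1) (k + 1 - i) =
      (-1) ^ (k - i) * Ring.choose n i * Ring.choose (n - i - 1) (k - i) +
        Ring.choose n (k + 1) * ((-1) ^ (k + 1 - i) * (k + 1).choose i) := by
  have trinomial_revision : (k + 1).choose i * Ring.choose n (k + 1) =
      Ring.choose n i * Ring.choose (n - i) (k - i + 1) := by
    rw [← nsmul_eq_mul, Ring.choose_smul_choose n (Nat.le_add_right_of_le hik),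
      Nat.sub_add_comm hik]
  have pascal : Ring.choose (n - i) (k - i + 1) =
      Ring.choose (n - i - 1) (k - i) + Ring.choose (n - i - 1) (k - i + 1) := by
    rw [← Ring.choose_succ_succ, sub_add_cancel]
  rw [Nat.sub_add_comm hik]
  linear_combination (-1) ^ (k - i) * (trinomial_revision + Ring.choose n i * pascal)

theorem sum_choose_smul_sub_one_pow (n : R) (y : A) (k : ℕ) :
    ∑ r ∈ Finset.range (k + 1), Ring.choose n r • (y - 1) ^ r =
      ∑ i ∈ Finset.range (k + 1),
        ((-1) ^ (k - i) * Ring.choose n i * Ring.choose (n - i - 1) (k - i)) • y ^ i := by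
  induction k with
  | zero => simp
  | succ k ih =>
    rw [Finset.sum_range_succ, ih, smul_sub_one_pow_eq_sum, Finset.sum_range_succ _ (k + 1),
      Finset.sum_range_succ _ (k + 1), ← add_assoc, ← Finset.sum_add_distrib]
    congr 1
    · refine Finset.sum_congr rfl fun i hi ↦ ?_
      rw [← add_smul,
        neg_one_pow_mul_choose_mul_choose_succ n (Nat.lt_succ_iff.mp (Finset.mem_range.mp hi))]
    · simp

end TruncatedBinomialSeries

section PositiveTuples

/-- The set `T(r, m)` of `r`-tuples of positive integers with sum `m`, over which the coefficient
of `X ^ m` in the `r`-th power of a power series without constant term is summed. Also defined for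
`m < r`, where it is empty. -/
def positiveTuples (r m : ℕ) : Finset (Fin r → ℕ) :=
  {c ∈ Finset.univ.piAntidiag m | ∀ t, 1 ≤ c t}

theorem mem_positiveTuples {r m : ℕ} {c : Fin r → ℕ} :
    c ∈ positiveTuples r m ↔ (∀ t, 1 ≤ c t) ∧ ∑ t, c t = m := by
  simp [positiveTuples, and_comm]

variable {R : Type*} [CommSemiring R]

theorem coeff_prod_univ {ι : Type*} [Fintype ι] [DecidableEq ι] (f : ι → R⟦X⟧) (m : ℕ) :
    coeff m (∏ t, f t) = ∑ c ∈ Finset.univ.piAntidiag m, ∏ t, coeff (c t) (f t) := by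
  rw [coeff_prod]
  exact Finset.sum_equiv Finsupp.equivFunOnFinite (by simp) fun _ _ ↦ rfl

theorem coeff_pow_eq_sum_positiveTuples {f : R⟦X⟧} (hf : constantCoeff f = 0) (r m : ℕ) :
    coeff m (f ^ r) = ∑ c ∈ positiveTuples r m, ∏ t, coeff (c t) f := by
  rw [← Fin.prod_const, coeff_prod_univ, positiveTuples]
  refine (Finset.sum_filter_of_ne fun c _ hprod t ↦ ?_).symm
  refine Nat.one_le_iff_ne_zero.mpr fun hct ↦ hprod (Finset.prod_eq_zero (Finset.mem_univ t) ?_)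
  rw [hct, coeff_zero_eq_constantCoeff_apply, hf]

end PositiveTuples

section BinomialSeries

variable {R : Type*} [CommRing R] [BinomialRing R]

theorem binomialSeries_pow {A : Type*} [Ring A] [Algebra R A] (x : R) (i : ℕ) :
    binomialSeries A x ^ i = binomialSeries A (i * x) := by
  induction i with
  | zero => simp
  | succ i ih => rw [pow_succ, ih, ← binomialSeries_add, Nat.cast_succ, add_one_mul]

theorem coeff_binomialSeries_pow (x : R) (i k : ℕ) :
    coeff k (binomialSeries R x ^ i) = Ring.choose (i * x) k := by
  rw [binomialSeries_pow, binomialSeries_coeff, smul_eq_mul, mul_one]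

theorem coeff_binomialSeries_sub_one_pow (x : R) (r k : ℕ) :
    coeff k ((binomialSeries R x - 1) ^ r) =
      ∑ c ∈ positiveTuples r k, ∏ t, Ring.choose x (c t) := by
  rw [coeff_pow_eq_sum_positiveTuples (by simp)]
  refine Finset.sum_congr rfl fun c hc ↦ Finset.prod_congr rfl fun t _ ↦ ?_
  have hct : c t ≠ 0 := Nat.one_le_iff_ne_zero.mp ((mem_positiveTuples.mp hc).1 t)
  simp [coeff_one, hct]

theorem lambda_coefficient_formula_general (n x : R) (k : ℕ) :
    ∑ r ∈ Finset.Icc 1 k,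
        Ring.choose n r * ∑ c ∈ positiveTuples r k, ∏ t, Ring.choose x (c t) =
      ∑ i ∈ Finset.Icc 1 k,
        (-1) ^ (k - i) * Ring.choose n i * Ring.choose (n - i - 1) (k - i) *
          Ring.choose (i * x) k := by
  obtain rfl | hk := k.eq_zero_or_pos
  · simp
  simp only [← coeff_binomialSeries_sub_one_pow, ← coeff_binomialSeries_pow]
  have coeff_one_eq_zero : coeff k (1 : R⟦X⟧) = 0 := by rw [coeff_one, if_neg hk.ne']
  rw [sum_Icc_one_eq_sum_range_succ (by rw [pow_zero, coeff_one_eq_zero, mul_zero]),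
    sum_Icc_one_eq_sum_range_succ (by rw [pow_zero, coeff_one_eq_zero, mul_zero])]
  simpa only [map_sum, coeff_smul, smul_eq_mul] using
    congrArg (coeff k) (sum_choose_smul_sub_one_pow n (binomialSeries R x) k)

end BinomialSeries

theorem gbinom_eq_choose {K : Type*} [Field K] [CharZero K] (a : K) (k : ℕ) :
    gbinom a k = Ring.choose a k := by
  rw [Ring.choose_eq_smul, gbinom, ← Polynomial.aeval_eq_smeval, Polynomial.aeval_def,
    Polynomial.eval₂_eq_eval_map, descPochhammer_map, descPochhammer_eval_eq_prod_range,
    smul_eq_mul, div_eq_inv_mul]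

theorem Tsum_eq_sum_positiveTuples (x : ℝ) (r k : ℕ) :
    Tsum x r k = ∑ c ∈ positiveTuples r k, ∏ t, gbinom x (c t) := by
  simp only [Tsum, ← mem_positiveTuples]
  rw [finsum_eq_finsetSum_of_support_subset (s := positiveTuples r k)]
  · exact Finset.sum_congr rfl fun c hc ↦ if_pos hc
  · exact fun c hc ↦ not_not.mp fun hcT ↦ hc (if_neg hcT)

/-- for reals `n`, `x` and an integer `k ≥ 1`:
`Σ_{r=1}^{k} binom(n,r) (Σ_{(s₁,…,s_r)∈T(r,k)} binom(x,s₁)⋯binom(x,s_r))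
  = Σ_{i=1}^{k} (−1)^{k−i} binom(n,i) binom(n−i−1,k−i) binom(ix,k)`. -/
theorem lambda_coefficient_formula (n x : ℝ) (k : ℕ) (hk : 1 ≤ k) :
    ∑ r ∈ Finset.Icc 1 k, gbinom n r * Tsum x r k =
      ∑ i ∈ Finset.Icc 1 k,
        (-1 : ℝ) ^ (k - i) * gbinom n i * gbinom (n - i - 1) (k - i) * gbinom ((i : ℝ) * x) k := by
  simp only [Tsum_eq_sum_positiveTuples, gbinom_eq_choose]
  exact lambda_coefficient_formula_general n x k
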